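/- arXiv:2005.06384 — 2 statements merged into one kernel-verified Lean document; each statement's English description precedes it below -/
import Mathlib

section
/- Let a be a real number with a > 3. Then for every real x > 0, g_a(x) < Γ(a,x) < G_a(x). -/
/-!
Substituting `t = x + u` gives `exp x * Γ(a, x) = E[(x + T) ^ (a - 1)]` with `T` standard
exponential. Likewise `exp x * G_a(x) = E[(x + U) ^ (a - 1)]` with `U` uniform on `[0, b_a]`, and
`exp x * g_a(x) = E[(x + V) ^ (a - 1) - V ^ (a - 1)] + E[T ^ (a - 1)]` with `V` uniform on `[0, 2]`.

For `b > 1` the exponential density minus the uniform density on `[0, b]` has sign pattern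
`+, -, +`, changing at `log b` and `b`. If `w` is strictly increasing and `φ` strictly convex, then
`φ ∘ w` minus the secant line of `φ` through `w (log b)` and `w b` has the same sign pattern. The
secant line contributes nothing when `w` has equal means under both laws, so `φ ∘ w` then has the
larger mean under the exponential one.

* Lower bound: take `w u = u` and `b = 2`, with common mean `1`; the increment
  `(x + u) ^ (a - 1) - u ^ (a - 1)` is strictly convex in `u` because `a - 1 > 2`.
* Upper bound: take `w u = u ^ (a - 1)` and `b = b_a`, which is chosen to make `Γ(a)` the common
  mean; `(x + u) ^ (a - 1)` is strictly concave as a function of `w`.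
-/

open Real Filter Set

/-- Upper incomplete gamma function `Γ(a,x) = ∫_x^∞ t^(a-1) e^(-t) dt`. -/
noncomputable def incGamma (a x : ℝ) : ℝ := ∫ t in Set.Ioi x, t ^ (a - 1) * Real.exp (-t)

/-- `b_a = Γ(a+1)^(1/(a-1))` for `a ≠ 1`, and `b_1 = e^(1-γ)`. -/
noncomputable def bCoef (a : ℝ) : ℝ :=
  if a = 1 then Real.exp (1 - Real.eulerMascheroniConstant)
  else Real.Gamma (a + 1) ^ (1 / (a - 1))

/-- `G_a(x) = ((x+b_a)^a - x^a) e^(-x) / (a b_a)`. -/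
noncomputable def Gbound (a x : ℝ) : ℝ :=
  ((x + bCoef a) ^ a - x ^ a) * Real.exp (-x) / (a * bCoef a)

/-- `g_a(x) = (((x+2)^a - x^a - 2^a)/(2a) + Γ(a)) e^(-x)`. -/
noncomputable def gbound (a x : ℝ) : ℝ :=
  (((x + 2) ^ a - x ^ a - (2 : ℝ) ^ a) / (2 * a) + Real.Gamma a) * Real.exp (-x)

/-- `g_a^lo(x) = x^a e^(-x) (x-a-1) / ((x-a)^2 + a)`. -/
noncomputable def gLo (a x : ℝ) : ℝ :=
  x ^ a * Real.exp (-x) * (x - a - 1) / ((x - a) ^ 2 + a)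

/-- `g_a^hi(x) = x^a e^(-x) / (x-a)`. -/
noncomputable def gHi (a x : ℝ) : ℝ := x ^ a * Real.exp (-x) / (x - a)

open MeasureTheory

section Convexity

variable {φ : ℝ → ℝ} {s : Set ℝ} {p x y z : ℝ}

/-- The affine function through the points `(x, φ x)` and `(y, φ y)` of the graph of `φ`, evaluated
at `z`. It is subtracted from `φ` to produce a function with two sign changes. -/
noncomputable def secantLine (φ : ℝ → ℝ) (x y z : ℝ) : ℝ := φ x + slope φ x y * (z - x)

theorem mul_sub_secantLine_pos (hφ : StrictConvexOn ℝ s φ) (hx : x ∈ s) (hy : y ∈ s) (hz : z ∈ s)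
    (hxy : x ≠ y) (hzx : z ≠ x) (hzy : z ≠ y) :
    0 < (z - x) * (z - y) * (φ z - secantLine φ x y z) := by
  have hfactor : (z - x) * (z - y) * (φ z - secantLine φ x y z) =
      (z - x) ^ 2 * ((z - y) * (slope φ x z - slope φ x y)) := by
    have hslope : (z - x) * slope φ x z = φ z - φ x := sub_smul_slope φ x z
    rw [secantLine]
    linear_combination -(z - x) * (z - y) * hslope
  have hslope_mono : ∀ u ∈ s, ∀ v ∈ s, u ≠ x → v ≠ x → u < v → slope φ x u < slope φ x v := by
    simpa only [slope_def_field] using fun u hu v hv => hφ.secant_strict_mono hx hu hv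
  rw [hfactor]
  refine mul_pos (sq_pos_of_ne_zero (sub_ne_zero.2 hzx)) ?_
  rcases hzy.lt_or_gt with h | h
  · exact mul_pos_of_neg_of_neg (sub_neg.2 h) (sub_neg.2 (hslope_mono z hz y hy hzx hxy.symm h))
  · exact mul_pos (sub_pos.2 h) (sub_pos.2 (hslope_mono y hy z hz hxy.symm hzx h))

theorem strictMonoOn_add_sub_of_strictConvexOn (hφ : StrictConvexOn ℝ s φ) (hx : 0 < x) :
    StrictMonoOn (fun u => φ (x + u) - φ u) (s ∩ (x + ·) ⁻¹' s) := by
  rintro u ⟨hu, hxu⟩ v ⟨hv, hxv⟩ huv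
  have hleft : slope φ u (x + u) < slope φ u (x + v) := by
    simpa only [slope_def_field] using
      hφ.secant_strict_mono hu hxu hxv (by linarith) (by linarith) (by linarith)
  have hright : slope φ (x + v) u < slope φ (x + v) v := by
    simpa only [slope_def_field] using
      hφ.secant_strict_mono hxv hu hv (by linarith) (by linarith) huv
  rw [slope_comm φ (x + v) u, slope_comm φ (x + v) v] at hright
  have hslopes := hleft.trans hright
  rwa [slope_def_field, slope_def_field, add_sub_cancel_right, add_sub_cancel_right,
    div_lt_div_iff_of_pos_right hx] at hslopes

theorem hasDerivAt_add_rpow (hp : 1 ≤ p) (x u : ℝ) :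
    HasDerivAt (fun u : ℝ => (x + u) ^ p) (p * (x + u) ^ (p - 1)) u := by
  simpa using ((hasDerivAt_id u).const_add x).rpow_const (Or.inr hp)

theorem strictConvexOn_add_rpow_sub_rpow (hp : 2 < p) (hx : 0 < x) :
    StrictConvexOn ℝ (Ici 0) fun u : ℝ => (x + u) ^ p - u ^ p := by
  have hderiv (u : ℝ) : HasDerivAt (fun u : ℝ => (x + u) ^ p - u ^ p)
      (p * ((x + u) ^ (p - 1) - u ^ (p - 1))) u := by
    rw [mul_sub]
    exact (hasDerivAt_add_rpow (by linarith) x u).sub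
      (hasDerivAt_rpow_const (Or.inr (by linarith)))
  have hincr : StrictMonoOn (fun u : ℝ => (x + u) ^ (p - 1) - u ^ (p - 1)) (Ioi 0) :=
    (strictMonoOn_add_sub_of_strictConvexOn (strictConvexOn_rpow (by linarith)) hx).mono
      fun u (hu : 0 < u) => ⟨hu.le, (add_pos hx hu).le⟩
  refine StrictMonoOn.strictConvexOn_of_deriv (convex_Ici 0)
    (fun u _ => (hderiv u).continuousAt.continuousWithinAt) ?_
  rw [interior_Ici, funext fun u => (hderiv u).deriv]
  exact fun u hu v hv huv => mul_lt_mul_of_pos_left (hincr hu hv huv) (by linarith)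

theorem hasDerivAt_add_rpow_inv_rpow (hp : 1 < p) (hx : 0 < x) {w : ℝ} (hw : 0 < w) :
    HasDerivAt (fun w : ℝ => (x + w ^ p⁻¹) ^ p) ((x * w ^ (-p⁻¹) + 1) ^ (p - 1)) w := by
  have hroot : HasDerivAt (fun w : ℝ => x + w ^ p⁻¹) (p⁻¹ * w ^ (p⁻¹ - 1)) w :=
    (hasDerivAt_rpow_const (Or.inl hw.ne')).const_add x
  have hbase : x * w ^ (-p⁻¹) + 1 = (x + w ^ p⁻¹) * w ^ (-p⁻¹) := by
    rw [add_mul, ← rpow_add hw, add_neg_cancel, rpow_zero]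
  have hexp : -p⁻¹ * (p - 1) = p⁻¹ - 1 := by field
  convert hroot.rpow_const (p := p) (Or.inr hp.le) using 1
  rw [hbase, mul_rpow (by positivity) (by positivity), ← rpow_mul hw.le, hexp]
  field

theorem strictConcaveOn_add_rpow_inv_rpow (hp : 1 < p) (hx : 0 < x) :
    StrictConcaveOn ℝ (Ici 0) fun w : ℝ => (x + w ^ p⁻¹) ^ p := by
  have hp₀ : 0 < p := by linarith
  refine StrictAntiOn.strictConcaveOn_of_deriv (convex_Ici 0) ?_ ?_
  · exact ((continuous_const.add (continuous_rpow_const (by positivity))).rpow_const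
      fun _ => Or.inr hp₀.le).continuousOn
  rw [interior_Ici]
  intro v (hv : 0 < v) w (hw : 0 < w) hvw
  rw [(hasDerivAt_add_rpow_inv_rpow hp hx hv).deriv, (hasDerivAt_add_rpow_inv_rpow hp hx hw).deriv]
  have hroot : w ^ (-p⁻¹) < v ^ (-p⁻¹) :=
    rpow_lt_rpow_of_neg hv hvw (neg_lt_zero.2 (by positivity))
  exact rpow_lt_rpow (by positivity) (by gcongr) (by linarith)

end Convexity

section Comparison

theorem integral_comp_mul_pos_of_sign_changes {α : Type*} [MeasurableSpace α] {μ : Measure α}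
    [NeZero μ] {φ : ℝ → ℝ} {s : Set ℝ} {w d : α → ℝ} {x y : ℝ} (hφ : StrictConvexOn ℝ s φ)
    (hx : x ∈ s) (hy : y ∈ s) (hxy : x ≠ y) (hws : ∀ᵐ u ∂μ, w u ∈ s) (hd : Integrable d μ)
    (hwd : Integrable (fun u => w u * d u) μ) (hφd : Integrable (fun u => φ (w u) * d u) μ)
    (hd_zero : ∫ u, d u ∂μ = 0) (hwd_zero : ∫ u, w u * d u ∂μ = 0)
    (hsign : ∀ᵐ u ∂μ, 0 < (w u - x) * (w u - y) * d u) :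
    0 < ∫ u, φ (w u) * d u ∂μ := by
  set m := slope φ x y with hm
  have hsplit (u : α) : (φ (w u) - secantLine φ x y (w u)) * d u =
      φ (w u) * d u - ((φ x - m * x) * d u + m * (w u * d u)) := by
    rw [secantLine, ← hm]; ring
  have hline : Integrable (fun u => (φ x - m * x) * d u + m * (w u * d u)) μ :=
    (hd.const_mul _).add (hwd.const_mul m)
  have hint : Integrable (fun u => (φ (w u) - secantLine φ x y (w u)) * d u) μ := by
    simp only [hsplit]
    exact hφd.sub hline
  have hintegral : ∫ u, φ (w u) * d u ∂μ =
      ∫ u, (φ (w u) - secantLine φ x y (w u)) * d u ∂μ := by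
    simp only [hsplit]
    rw [integral_sub hφd hline, integral_add (hd.const_mul _) (hwd.const_mul m),
      integral_const_mul, integral_const_mul, hd_zero, hwd_zero]
    ring
  have hpos : ∀ᵐ u ∂μ, 0 < (φ (w u) - secantLine φ x y (w u)) * d u := by
    filter_upwards [hws, hsign] with u hu hsign_u
    have hux : w u ≠ x := by rintro h; simp [h] at hsign_u
    have huy : w u ≠ y := by rintro h; simp [h] at hsign_u
    have hprod := mul_pos (mul_sub_secantLine_pos hφ hx hy hu hxy hux huy) hsign_u
    refine pos_of_mul_pos_right (a := ((w u - x) * (w u - y)) ^ 2) ?_ (sq_nonneg _)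
    linear_combination hprod
  rw [hintegral]
  refine (integral_nonneg_of_ae (hpos.mono fun _ => le_of_lt)).lt_of_ne fun hzero => ?_
  have hae := (integral_eq_zero_iff_of_nonneg_ae (hpos.mono fun _ => le_of_lt) hint).1 hzero.symm
  obtain ⟨u, hu, hu_zero⟩ := (hpos.and hae).exists
  exact hu.ne' hu_zero

/-- The density of the standard exponential law minus that of the uniform law on `(0, b]`. It is
meant to be used on `(0, ∞)` only, so the uniform density is not cut off at `0`. -/
noncomputable def expSubUniform (b u : ℝ) : ℝ := exp (-u) - (Iic b).indicator (fun _ => b⁻¹) u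

variable {b : ℝ} {f : ℝ → ℝ}

theorem expSubUniform_mul_pos (hb : 1 < b) {w : ℝ → ℝ} (hw : StrictMonoOn w (Ioi 0)) {u : ℝ}
    (hu : 0 < u) (hu_log : u ≠ log b) (hub : u ≠ b) :
    0 < (w u - w (log b)) * (w u - w b) * expSubUniform b u := by
  have hb₀ : 0 < b := by linarith
  have hlog : 0 < log b := log_pos hb
  have hlog_lt : log b < b := by linarith [log_le_sub_one_of_pos hb₀]
  have hinv : b⁻¹ = exp (-log b) := by rw [exp_neg, exp_log hb₀]
  rcases hub.lt_or_gt with h | h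
  · have hwu : w u - w b < 0 := sub_neg.2 (hw hu hb₀ h)
    rw [expSubUniform, indicator_of_mem (mem_Iic.2 h.le), hinv]
    rcases hu_log.lt_or_gt with h' | h'
    · exact mul_pos (mul_pos_of_neg_of_neg (sub_neg.2 (hw hu hlog h')) hwu)
        (sub_pos.2 (exp_lt_exp.2 (neg_lt_neg h')))
    · exact mul_pos_of_neg_of_neg (mul_neg_of_pos_of_neg (sub_pos.2 (hw hlog hu h')) hwu)
        (sub_neg.2 (exp_lt_exp.2 (neg_lt_neg h')))
  · rw [expSubUniform, indicator_of_notMem (notMem_Iic.2 h), sub_zero]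
    exact mul_pos (mul_pos (sub_pos.2 (hw hlog hu (hlog_lt.trans h)))
      (sub_pos.2 (hw hb₀ hu h))) (exp_pos _)

theorem integrableOn_Ioc_of_mul_exp_neg (hf : IntegrableOn (fun u => f u * exp (-u)) (Ioi 0)) :
    IntegrableOn f (Ioc 0 b) := by
  have hmul := (hf.mono_set Ioc_subset_Ioi_self).mul_continuousOn_of_subset
    continuous_exp.continuousOn measurableSet_Ioc isCompact_Icc Ioc_subset_Icc_self (A := Ioc 0 b)
  simpa only [mul_assoc, ← exp_add, neg_add_cancel, exp_zero, mul_one] using hmul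

theorem mul_expSubUniform (f : ℝ → ℝ) (b u : ℝ) :
    f u * expSubUniform b u = f u * exp (-u) - (Iic b).indicator (fun u => f u * b⁻¹) u := by
  rw [expSubUniform, mul_sub, indicator_mul_right]

theorem integrableOn_indicator_Iic (hf : IntegrableOn (fun u => f u * exp (-u)) (Ioi 0)) :
    IntegrableOn ((Iic b).indicator fun u => f u * b⁻¹) (Ioi 0) := by
  rw [IntegrableOn, integrable_indicator_iff measurableSet_Iic, IntegrableOn,
    Measure.restrict_restrict measurableSet_Iic, Iic_inter_Ioi]
  exact (integrableOn_Ioc_of_mul_exp_neg hf).mul_const _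

theorem integrableOn_mul_expSubUniform (hf : IntegrableOn (fun u => f u * exp (-u)) (Ioi 0)) :
    IntegrableOn (fun u => f u * expSubUniform b u) (Ioi 0) := by
  simp only [mul_expSubUniform]
  exact hf.sub (integrableOn_indicator_Iic hf)

theorem integral_mul_expSubUniform (hb : 0 < b)
    (hf : IntegrableOn (fun u => f u * exp (-u)) (Ioi 0)) :
    ∫ u in Ioi 0, f u * expSubUniform b u =
      (∫ u in Ioi 0, f u * exp (-u)) - ⨍ u in (0)..b, f u := by
  simp only [mul_expSubUniform]
  rw [integral_sub hf (integrableOn_indicator_Iic hf), setIntegral_indicator measurableSet_Iic,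
    Ioi_inter_Iic, integral_mul_const, interval_average_eq_div,
    intervalIntegral.integral_of_le hb.le, sub_zero, div_eq_mul_inv]

theorem integrableOn_expSubUniform : IntegrableOn (expSubUniform b) (Ioi 0) := by
  simpa only [one_mul] using integrableOn_mul_expSubUniform (f := fun _ => 1) (b := b)
    (by simpa only [one_mul] using integrableOn_exp_neg_Ioi 0)

theorem integral_expSubUniform (hb : 0 < b) : ∫ u in Ioi 0, expSubUniform b u = 0 := by
  have hone := integral_mul_expSubUniform (f := fun _ => 1) hb
    (by simpa only [one_mul] using integrableOn_exp_neg_Ioi 0)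
  simpa only [one_mul, integral_exp_neg_Ioi_zero, interval_average_eq_div,
    intervalIntegral.integral_const, sub_zero, smul_eq_mul, mul_one, div_self hb.ne',
    sub_self] using hone

theorem intervalAverage_lt_integral_mul_exp_neg (hb : 1 < b) {φ w : ℝ → ℝ} {s : Set ℝ}
    (hφ : StrictConvexOn ℝ s φ) (hw : StrictMonoOn w (Ioi 0)) (hws : MapsTo w (Ioi 0) s)
    (hwi : IntegrableOn (fun u => w u * exp (-u)) (Ioi 0))
    (hφi : IntegrableOn (fun u => φ (w u) * exp (-u)) (Ioi 0))
    (hmean : ⨍ u in (0)..b, w u = ∫ u in Ioi 0, w u * exp (-u)) :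
    ⨍ u in (0)..b, φ (w u) < ∫ u in Ioi 0, φ (w u) * exp (-u) := by
  have hb₀ : 0 < b := by linarith
  have hlog : 0 < log b := log_pos hb
  have hlog_ne : log b ≠ b := (log_le_sub_one_of_pos hb₀).trans_lt (by linarith) |>.ne
  have : NeZero (volume.restrict (Ioi (0 : ℝ))) := ⟨by simp⟩
  have hsign : ∀ᵐ u ∂volume.restrict (Ioi (0 : ℝ)),
      0 < (w u - w (log b)) * (w u - w b) * expSubUniform b u := by
    filter_upwards [ae_restrict_mem measurableSet_Ioi, Measure.ae_ne _ (log b),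
      Measure.ae_ne _ b] with u hu hu_log hub
    exact expSubUniform_mul_pos hb hw hu hu_log hub
  have hpos := integral_comp_mul_pos_of_sign_changes hφ (hws hlog) (hws hb₀)
    (hw.injOn.ne hlog hb₀ hlog_ne)
    ((ae_restrict_mem measurableSet_Ioi).mono hws) integrableOn_expSubUniform
    (integrableOn_mul_expSubUniform hwi)
    (integrableOn_mul_expSubUniform (f := fun u => φ (w u)) hφi) (integral_expSubUniform hb₀)
    (by rw [integral_mul_expSubUniform hb₀ hwi, hmean, sub_self]) hsign
  rwa [integral_mul_expSubUniform (f := fun u => φ (w u)) hb₀ hφi, sub_pos] at hpos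

theorem integral_mul_exp_neg_lt_intervalAverage (hb : 1 < b) {φ w : ℝ → ℝ} {s : Set ℝ}
    (hφ : StrictConcaveOn ℝ s φ) (hw : StrictMonoOn w (Ioi 0)) (hws : MapsTo w (Ioi 0) s)
    (hwi : IntegrableOn (fun u => w u * exp (-u)) (Ioi 0))
    (hφi : IntegrableOn (fun u => φ (w u) * exp (-u)) (Ioi 0))
    (hmean : ⨍ u in (0)..b, w u = ∫ u in Ioi 0, w u * exp (-u)) :
    ∫ u in Ioi 0, φ (w u) * exp (-u) < ⨍ u in (0)..b, φ (w u) := by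
  have hneg := intervalAverage_lt_integral_mul_exp_neg hb hφ.neg hw hws hwi
    (by simp only [Pi.neg_apply, neg_mul]; exact hφi.neg) hmean
  simpa only [Pi.neg_apply, neg_mul, integral_neg, average_neg, neg_lt_neg_iff] using hneg

end Comparison

section ShiftedPowers

variable {p x b : ℝ}

theorem integral_Ioi_comp_add_left {E : Type*} [NormedAddCommGroup E] [NormedSpace ℝ E]
    (f : ℝ → E) (x c : ℝ) : ∫ u in Ioi c, f (x + u) = ∫ t in Ioi (x + c), f t := by
  have hcomp := (measurePreserving_add_left volume x).setIntegral_preimage_emb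
    (measurableEmbedding_addLeft x) f (Ioi (x + c))
  rwa [preimage_const_add_Ioi, add_sub_cancel_left] at hcomp

theorem integrableOn_Ioi_comp_add_left {E : Type*} [NormedAddCommGroup E] {f : ℝ → E} {x c : ℝ}
    (hf : IntegrableOn f (Ioi (x + c))) : IntegrableOn (fun u => f (x + u)) (Ioi c) := by
  have hcomp := ((measurePreserving_add_left volume x).integrableOn_comp_preimage
    (measurableEmbedding_addLeft x)).2 hf
  rwa [preimage_const_add_Ioi, add_sub_cancel_left] at hcomp

theorem add_rpow_mul_exp_neg (p x u : ℝ) :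
    (x + u) ^ p * exp (-u) = (x + u) ^ p * exp (-(x + u)) * exp x := by
  rw [mul_assoc, ← exp_add]
  ring_nf

theorem integrableOn_rpow_mul_exp_neg (hp : -1 < p) :
    IntegrableOn (fun u : ℝ => u ^ p * exp (-u)) (Ioi 0) := by
  simpa only [add_sub_cancel_right, mul_comm] using
    GammaIntegral_convergent (s := p + 1) (by linarith)

theorem integrableOn_add_rpow_mul_exp_neg (hp : -1 < p) (hx : 0 ≤ x) :
    IntegrableOn (fun u => (x + u) ^ p * exp (-u)) (Ioi 0) := by
  have htail : IntegrableOn (fun t : ℝ => t ^ p * exp (-t)) (Ioi (x + 0)) :=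
    (integrableOn_rpow_mul_exp_neg hp).mono_set (Ioi_subset_Ioi (by simpa using hx))
  simp only [add_rpow_mul_exp_neg]
  exact (integrableOn_Ioi_comp_add_left htail).mul_const (exp x)

theorem integral_rpow_mul_exp_neg (hp : -1 < p) :
    ∫ u in Ioi (0 : ℝ), u ^ p * exp (-u) = Gamma (p + 1) := by
  simp only [Gamma_eq_integral (by linarith : 0 < p + 1), add_sub_cancel_right, mul_comm]

theorem intervalAverage_add_rpow (hp : -1 < p) (x b : ℝ) :
    ⨍ u in (0)..b, (x + u) ^ p = ((x + b) ^ (p + 1) - x ^ (p + 1)) / ((p + 1) * b) := by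
  rw [interval_average_eq_div, intervalIntegral.integral_comp_add_left (fun t => t ^ p),
    integral_rpow (Or.inl hp), add_zero, sub_zero, div_div]

theorem intervalAverage_rpow (hp : -1 < p) (hb : b ≠ 0) :
    ⨍ u in (0)..b, u ^ p = b ^ p / (p + 1) := by
  have havg := intervalAverage_add_rpow hp 0 b
  simp only [zero_add] at havg
  rw [havg, zero_rpow (by linarith), sub_zero, rpow_add_one hb, mul_div_mul_right _ _ hb]

theorem intervalAverage_add_rpow_sub_rpow (hp : -1 < p) (x : ℝ) (hb : b ≠ 0) :
    ⨍ u in (0)..b, ((x + u) ^ p - u ^ p) =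
      ((x + b) ^ (p + 1) - x ^ (p + 1) - b ^ (p + 1)) / ((p + 1) * b) := by
  have hint (y : ℝ) : IntervalIntegrable (fun u : ℝ => (y + u) ^ p) volume 0 b := by
    simpa using (intervalIntegral.intervalIntegrable_rpow' (a := y) (b := y + b) hp).comp_add_left y
  have hint₀ := hint 0
  have havg := intervalAverage_add_rpow hp x b
  have havg₀ := intervalAverage_rpow hp hb
  simp only [zero_add] at hint₀
  rw [interval_average_eq_div] at havg havg₀ ⊢
  rw [intervalIntegral.integral_sub (hint x) hint₀, sub_div, havg, havg₀, sub_div _ (b ^ (p + 1)),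
    rpow_add_one hb, mul_div_mul_right _ _ hb]

theorem integral_add_rpow_sub_rpow_mul_exp_neg (hp : -1 < p) (hx : 0 ≤ x) :
    ∫ u in Ioi 0, ((x + u) ^ p - u ^ p) * exp (-u) =
      (∫ u in Ioi 0, (x + u) ^ p * exp (-u)) - Gamma (p + 1) := by
  simp only [sub_mul]
  rw [integral_sub (integrableOn_add_rpow_mul_exp_neg hp hx) (integrableOn_rpow_mul_exp_neg hp),
    integral_rpow_mul_exp_neg hp]

theorem intervalAverage_add_rpow_sub_rpow_lt_integral_mul_exp_neg (hp : 2 < p) (hx : 0 < x) :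
    ⨍ u in (0)..2, ((x + u) ^ p - u ^ p) < ∫ u in Ioi 0, ((x + u) ^ p - u ^ p) * exp (-u) := by
  have hp₁ : -1 < p := by linarith
  have hid : IntegrableOn (fun u : ℝ => u * exp (-u)) (Ioi 0) := by
    simpa only [rpow_one] using integrableOn_rpow_mul_exp_neg (p := 1) (by norm_num)
  have hmean : ⨍ u in (0)..(2 : ℝ), u = ∫ u in Ioi (0 : ℝ), u * exp (-u) := by
    have hexp := integral_rpow_mul_exp_neg (p := 1) (by norm_num)
    simp only [rpow_one, one_add_one_eq_two, Gamma_two] at hexp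
    rw [hexp, interval_average_eq_div, integral_id]
    norm_num
  have hincr : IntegrableOn (fun u => ((x + u) ^ p - u ^ p) * exp (-u)) (Ioi 0) := by
    simp only [sub_mul]
    exact (integrableOn_add_rpow_mul_exp_neg hp₁ hx.le).sub (integrableOn_rpow_mul_exp_neg hp₁)
  exact intervalAverage_lt_integral_mul_exp_neg one_lt_two (strictConvexOn_add_rpow_sub_rpow hp hx)
    (strictMono_id.strictMonoOn _) Ioi_subset_Ici_self hid hincr hmean

theorem integral_add_rpow_mul_exp_neg_lt_intervalAverage (hp : 1 < p) (hx : 0 < x) (hb : 1 < b)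
    (hbp : b ^ p = Gamma (p + 2)) :
    ∫ u in Ioi 0, (x + u) ^ p * exp (-u) < ⨍ u in (0)..b, (x + u) ^ p := by
  have hp₁ : -1 < p := by linarith
  have hmean : ⨍ u in (0)..b, u ^ p = ∫ u in Ioi 0, u ^ p * exp (-u) := by
    rw [intervalAverage_rpow hp₁ (by linarith), integral_rpow_mul_exp_neg hp₁, hbp,
      ← one_add_one_eq_two, ← add_assoc, Gamma_add_one (by linarith),
      mul_div_cancel_left₀ _ (by linarith)]
  have hroot : EqOn (fun u : ℝ => (x + (u ^ p) ^ p⁻¹) ^ p) (fun u => (x + u) ^ p) (Ioi 0) :=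
    fun u (hu : 0 < u) => by simp only [rpow_rpow_inv hu.le (by linarith : p ≠ 0)]
  have hroot_exp : EqOn (fun u : ℝ => (x + (u ^ p) ^ p⁻¹) ^ p * exp (-u))
      (fun u => (x + u) ^ p * exp (-u)) (Ioi 0) := fun u hu => congrArg (· * exp (-u)) (hroot hu)
  have hroot_avg : ⨍ u in (0)..b, (x + (u ^ p) ^ p⁻¹) ^ p = ⨍ u in (0)..b, (x + u) ^ p :=
    setAverage_congr_fun measurableSet_uIoc <| ae_of_all _ fun u hu => hroot <| by
      rw [uIoc_of_le (by linarith)] at hu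
      exact hu.1
  rw [← hroot_avg, ← setIntegral_congr_fun measurableSet_Ioi hroot_exp]
  exact integral_mul_exp_neg_lt_intervalAverage hb (strictConcaveOn_add_rpow_inv_rpow hp hx)
    (fun u hu v _ huv => rpow_lt_rpow (le_of_lt hu) huv (by linarith))
    (fun u hu => rpow_nonneg (le_of_lt hu) p) (integrableOn_rpow_mul_exp_neg hp₁)
    ((integrableOn_add_rpow_mul_exp_neg hp₁ hx.le).congr_fun hroot_exp.symm measurableSet_Ioi)
    hmean

end ShiftedPowers

section IncompleteGamma

variable {a : ℝ}

theorem incGamma_eq_integral_mul_exp_neg (a x : ℝ) :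
    incGamma a x = (∫ u in Ioi 0, (x + u) ^ (a - 1) * exp (-u)) * exp (-x) := by
  simp only [add_rpow_mul_exp_neg]
  rw [integral_mul_const, integral_Ioi_comp_add_left (fun t => t ^ (a - 1) * exp (-t)), add_zero,
    mul_assoc, ← exp_add, add_neg_cancel, exp_zero, mul_one, incGamma]

theorem gbound_eq_intervalAverage (ha : 0 < a) (x : ℝ) :
    gbound a x =
      ((⨍ u in (0)..2, ((x + u) ^ (a - 1) - u ^ (a - 1))) + Gamma a) * exp (-x) := by
  rw [gbound, intervalAverage_add_rpow_sub_rpow (by linarith) x two_ne_zero, sub_add_cancel,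
    mul_comm 2 a]

theorem Gbound_eq_intervalAverage (ha : 0 < a) (x : ℝ) :
    Gbound a x = (⨍ u in (0)..(bCoef a), (x + u) ^ (a - 1)) * exp (-x) := by
  rw [Gbound, intervalAverage_add_rpow (by linarith), sub_add_cancel, div_mul_eq_mul_div]

theorem bCoef_rpow (ha : 1 < a) : bCoef a ^ (a - 1) = Gamma (a + 1) := by
  rw [bCoef, if_neg ha.ne', one_div,
    rpow_inv_rpow (Gamma_pos_of_pos (by linarith)).le (sub_pos.2 ha).ne']

theorem one_lt_bCoef (ha : 1 < a) : 1 < bCoef a := by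
  have hGamma : 1 < Gamma (a + 1) := by
    simpa only [Gamma_two] using
      Gamma_strictMonoOn_Ici self_mem_Ici (mem_Ici.2 (by linarith)) (by linarith : 2 < a + 1)
  rw [bCoef, if_neg ha.ne']
  exact one_lt_rpow hGamma (one_div_pos.2 (sub_pos.2 ha))

theorem gbound_lt_incGamma (ha : 3 < a) {x : ℝ} (hx : 0 < x) : gbound a x < incGamma a x := by
  have hlt := intervalAverage_add_rpow_sub_rpow_lt_integral_mul_exp_neg (p := a - 1)
    (by linarith) hx
  rw [integral_add_rpow_sub_rpow_mul_exp_neg (by linarith) hx.le, sub_add_cancel,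
    lt_sub_iff_add_lt] at hlt
  rw [gbound_eq_intervalAverage (by linarith), incGamma_eq_integral_mul_exp_neg]
  exact mul_lt_mul_of_pos_right hlt (exp_pos _)

theorem incGamma_lt_Gbound (ha : 2 < a) {x : ℝ} (hx : 0 < x) : incGamma a x < Gbound a x := by
  have ha₁ : 1 < a := by linarith
  have hlt := integral_add_rpow_mul_exp_neg_lt_intervalAverage (p := a - 1) (by linarith) hx
    (one_lt_bCoef ha₁) (by rw [bCoef_rpow ha₁]; ring_nf)
  rw [Gbound_eq_intervalAverage (by linarith), incGamma_eq_integral_mul_exp_neg]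
  exact mul_lt_mul_of_pos_right hlt (exp_pos _)

end IncompleteGamma

theorem stmt5 (a : ℝ) (ha : 3 < a) :
    ∀ x : ℝ, 0 < x → gbound a x < incGamma a x ∧ incGamma a x < Gbound a x :=
  fun _ hx => ⟨gbound_lt_incGamma ha hx, incGamma_lt_Gbound (by linarith) hx⟩
end

section
/- As a → ∞ (a real), the supremum over x > 0 of G_a(x)/Γ(a,x) tends to ∞, and the supremum over x > 0 of Γ(a,x)/g_a(x) tends to ∞. -/
/-!
Up to factors depending only on `a`, the function `Γ(a,x)` behaves like `(1+x)^(a-1) e^(-x)` on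
`x > 0`. This makes both suprema finite (on an unbounded set `sSup` would be `0`), and it remains to
exhibit points at which the ratios are large.

*First ratio.* Since `(x+b)^a - x^a ≥ b (x+b)^(a-1)`, `Γ(a,x) ≤ Γ(a)` and
`b_a^(a-1) = Γ(a+1) = a Γ(a)`, one has `G_a(x)/Γ(a,x) ≥ (1 + x/b_a)^(a-1) e^(-x)`, which at
`x = b_a` is `2^(a-1) e^(-b_a)`. Let `u = a - 1`. Replacing `t^u` by the bound `(r u)^u e^(t/(e r))`
in the integral of `Γ(u+2)`, with `r` slightly above `1/e`, shows that for every `c > 1/e` one has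
`b_a ≤ c (a-1)` eventually. As `1/e < 1/2 < log 2`, the value at `b_a` tends to infinity.

*Second ratio.* For fixed `x`, powers `R^a` are negligible against `Γ(a)`, so `Γ(a,x) ~ Γ(a)` and
`g_a(x) ~ Γ(a) e^(-x)` as `a → ∞`. Hence the ratio at `x` tends to `e^x`, and `x` is arbitrary.
-/

open Real Filter Set

open MeasureTheory Asymptotics Topology

lemma tendsto_sSup_image_atTop {ι X R : Type*} [ConditionallyCompleteLattice R] {l : Filter ι}
    {s : Set X} {f : ι → X → R}
    (hbdd : ∀ᶠ i in l, BddAbove (f i '' s)) (h : ∀ C, ∀ᶠ i in l, ∃ x ∈ s, C ≤ f i x) :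
    Tendsto (fun i => sSup (f i '' s)) l atTop := by
  refine tendsto_atTop.2 fun C => ?_
  filter_upwards [hbdd, h C] with i hi ⟨x, hx, hC⟩
  exact hC.trans (le_csSup hi (mem_image_of_mem _ hx))

/-! ### The incomplete gamma function -/

section IncGamma

variable {a x : ℝ}

lemma integrableOn_rpow_sub_one_mul_exp_neg (ha : 0 < a) (hx : 0 ≤ x) :
    IntegrableOn (fun t : ℝ => t ^ (a - 1) * exp (-t)) (Ioi x) := by
  simpa only [mul_comm] using (GammaIntegral_convergent ha).mono_set (Ioi_subset_Ioi hx)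

lemma incGamma_zero (ha : 0 < a) : incGamma a 0 = Gamma a := by
  simp only [incGamma, Gamma_eq_integral ha, mul_comm]

lemma antitoneOn_incGamma (ha : 0 < a) : AntitoneOn (incGamma a) (Ici 0) := by
  intro x hx y _ hxy
  refine setIntegral_mono_set (integrableOn_rpow_sub_one_mul_exp_neg ha hx) ?_
    (Ioi_subset_Ioi hxy).eventuallyLE
  filter_upwards [ae_restrict_mem measurableSet_Ioi] with t ht
  have ht0 : 0 < t := (mem_Ici.1 hx).trans_lt ht
  simp only [Pi.zero_apply]
  positivity

lemma incGamma_le_Gamma (ha : 0 < a) (hx : 0 ≤ x) : incGamma a x ≤ Gamma a :=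
  incGamma_zero ha ▸ antitoneOn_incGamma ha self_mem_Ici hx hx

lemma Gamma_sub_incGamma_le (ha : 0 < a) (hx : 0 ≤ x) : Gamma a - incGamma a x ≤ x ^ a / a := by
  have hsplit : (∫ t in 0..x, t ^ (a - 1) * exp (-t)) + incGamma a x = Gamma a := by
    rw [← incGamma_zero ha]
    exact intervalIntegral.integral_interval_add_Ioi
      (integrableOn_rpow_sub_one_mul_exp_neg ha le_rfl)
      (integrableOn_rpow_sub_one_mul_exp_neg ha hx)
  have hpow : ∫ t in 0..x, t ^ (a - 1) = x ^ a / a := by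
    rw [integral_rpow (Or.inl (by linarith)), sub_add_cancel, zero_rpow ha.ne', sub_zero]
  rw [← hsplit, add_sub_cancel_right, ← hpow]
  refine intervalIntegral.integral_mono_on hx ?_
    (intervalIntegral.intervalIntegrable_rpow' (by linarith)) fun t ht => ?_
  · exact (intervalIntegrable_iff_integrableOn_Ioc_of_le hx).2
      ((integrableOn_rpow_sub_one_mul_exp_neg ha le_rfl).mono_set Ioc_subset_Ioi_self)
  · exact mul_le_of_le_one_right (rpow_nonneg ht.1 _) (exp_le_one_iff.2 (neg_nonpos.2 ht.1))

lemma rpow_mul_exp_neg_le_incGamma (ha : 1 ≤ a) (hx : 0 ≤ x) :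
    x ^ (a - 1) * exp (-x) ≤ incGamma a x := by
  rw [← integral_exp_neg_Ioi x, ← integral_const_mul]
  refine setIntegral_mono_on ((integrableOn_exp_neg_Ioi x).const_mul _)
    (integrableOn_rpow_sub_one_mul_exp_neg (by linarith) hx) measurableSet_Ioi fun t ht => ?_
  gcongr
  exact ht.le

lemma one_add_rpow_mul_exp_neg_le_incGamma (ha : 1 ≤ a) (hx : 0 ≤ x) :
    (1 + x) ^ (a - 1) * exp (-(1 + x)) ≤ incGamma a x :=
  have hx1 : 0 ≤ 1 + x := by linarith
  (rpow_mul_exp_neg_le_incGamma ha hx1).trans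
    (antitoneOn_incGamma (by linarith) hx hx1 (by linarith))

lemma incGamma_pos (ha : 1 ≤ a) (hx : 0 ≤ x) : 0 < incGamma a x :=
  lt_of_lt_of_le (by positivity) (one_add_rpow_mul_exp_neg_le_incGamma ha hx)

lemma incGamma_add (a x c : ℝ) :
    incGamma a (x + c) = ∫ t in Ioi x, (t + c) ^ (a - 1) * exp (-(t + c)) := by
  have hpre : (· + c) ⁻¹' Ioi (x + c) = Ioi x := by simp
  rw [incGamma, ← (measurePreserving_add_right volume c).setIntegral_preimage_emb
    (measurableEmbedding_addRight c) (fun t => t ^ (a - 1) * exp (-t)), hpre]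

-- After the shift `t = s + (x - 1)`, `s > 1`, the integrand is controlled by `t ≤ (1 + x) s`.
lemma incGamma_le_one_add_rpow_mul_exp (ha : 1 ≤ a) (hx : 0 ≤ x) :
    incGamma a x ≤ (1 + x) ^ (a - 1) * exp (1 - x) * incGamma a 1 := by
  rw [← add_sub_cancel 1 x, incGamma_add, add_sub_cancel, incGamma, ← integral_const_mul]
  refine integral_mono_of_nonneg ?_
    ((integrableOn_rpow_sub_one_mul_exp_neg (by linarith) zero_le_one).const_mul _) ?_
  all_goals
    filter_upwards [ae_restrict_mem measurableSet_Ioi] with s hs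
    have hs1 : 1 < s := hs
    have hsx : 0 ≤ s + (x - 1) := by linarith
  · simp only [Pi.zero_apply]
    positivity
  · calc (s + (x - 1)) ^ (a - 1) * exp (-(s + (x - 1)))
        ≤ ((1 + x) * s) ^ (a - 1) * exp (-(s + (x - 1))) := by
          gcongr
          nlinarith
      _ = (1 + x) ^ (a - 1) * exp (1 - x) * (s ^ (a - 1) * exp (-s)) := by
          rw [mul_rpow (by linarith) (by linarith),
            show -(s + (x - 1)) = (1 - x) + -s by ring, exp_add]
          ring

end IncGamma

/-! ### Growth of the gamma function -/

lemma rpow_isLittleO_rpow_atTop {r R : ℝ} (h : |r| < R) :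
    (fun a : ℝ => r ^ a) =o[atTop] fun a => R ^ a := by
  have hR : 0 < R := (abs_nonneg r).trans_lt h
  have habs : (fun a : ℝ => |r| ^ a) =o[atTop] fun a => R ^ a := by
    refine isLittleO_of_tendsto (fun a ha => absurd ha (rpow_pos_of_pos hR a).ne') ?_
    simp only [← div_rpow (abs_nonneg r) hR.le]
    exact tendsto_rpow_atTop_of_base_lt_one _
      (by linarith [div_nonneg (abs_nonneg r) hR.le]) ((div_lt_one hR).2 h)
  exact (IsBigO.of_norm_le fun a => abs_rpow_le_abs_rpow r a).trans_isLittleO habs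

lemma rpow_isLittleO_Gamma (R : ℝ) : (fun a : ℝ => R ^ a) =o[atTop] Gamma := by
  set S := |R| + 1
  have hS0 : 0 < S := by positivity
  refine (rpow_isLittleO_rpow_atTop (lt_add_one |R|)).trans_isBigO (.of_bound (S * exp S) ?_)
  filter_upwards [eventually_ge_atTop 1] with a ha
  have ha0 : 0 < a := by linarith
  rw [norm_of_nonneg (rpow_nonneg hS0.le a), norm_of_nonneg (Gamma_pos_of_pos ha0).le]
  calc S ^ a = S * exp S * (S ^ (a - 1) * exp (-S)) := by
        rw [rpow_sub_one hS0.ne', exp_neg]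
        field_simp
    _ ≤ S * exp S * Gamma a := by
        gcongr
        exact (rpow_mul_exp_neg_le_incGamma ha hS0.le).trans (incGamma_le_Gamma ha0 hS0.le)

lemma rpow_le_mul_rpow_mul_exp {r u t : ℝ} (hr : 0 < r) (hu : 0 < u) (ht : 0 ≤ t) :
    t ^ u ≤ (r * u) ^ u * exp (exp (-1) / r * t) := by
  set y := exp (-1) / r * t / u with hy
  have htangent : t ≤ r * u * exp y := by
    have h : y ≤ exp (y - 1) := by linarith [add_one_le_exp (y - 1)]
    rw [sub_eq_add_neg, exp_add] at h
    calc t = r * u * (y / exp (-1)) := by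
          rw [hy]
          field_simp
      _ ≤ r * u * exp y := by
          gcongr
          exact (div_le_iff₀ (exp_pos _)).2 h
  calc t ^ u ≤ (r * u * exp y) ^ u := by gcongr
    _ = (r * u) ^ u * exp (exp (-1) / r * t) := by
        rw [mul_rpow (by positivity) (exp_pos _).le, ← exp_mul, hy, div_mul_cancel₀ _ hu.ne']

-- As `r` decreases to `e⁻¹`, this recovers the exponential order `(u/e)^u` of Stirling's formula.
lemma Gamma_add_le_mul_rpow {s u r : ℝ} (hs : 0 < s) (hu : 0 < u) (hr : exp (-1) < r) :
    Gamma (s + u) ≤ (1 / (1 - exp (-1) / r)) ^ s * Gamma s * (r * u) ^ u := by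
  have hr0 : 0 < r := (exp_pos _).trans hr
  set θ := 1 - exp (-1) / r with hθ
  have hθ0 : 0 < θ := sub_pos.2 ((div_lt_one hr0).2 hr)
  have hint : IntegrableOn (fun t : ℝ => t ^ (s - 1) * exp (-(θ * t))) (Ioi 0) := by
    simpa using integrableOn_rpow_mul_exp_neg_mul_rpow (s := s - 1) (by linarith) one_pos hθ0
  rw [mul_comm, ← integral_rpow_mul_exp_neg_mul_Ioi hs hθ0, ← integral_const_mul,
    ← incGamma_zero (by linarith)]
  refine setIntegral_mono_on (integrableOn_rpow_sub_one_mul_exp_neg (by linarith) le_rfl)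
    (hint.const_mul _) measurableSet_Ioi fun t (ht : 0 < t) => ?_
  calc t ^ (s + u - 1) * exp (-t) = t ^ u * (t ^ (s - 1) * exp (-t)) := by
        rw [show s + u - 1 = u + (s - 1) by ring, rpow_add ht, mul_assoc]
    _ ≤ (r * u) ^ u * exp (exp (-1) / r * t) * (t ^ (s - 1) * exp (-t)) := by
        gcongr
        exact rpow_le_mul_rpow_mul_exp hr0 hu ht.le
    _ = (r * u) ^ u * (t ^ (s - 1) * exp (-(θ * t))) := by
        rw [show -(θ * t) = exp (-1) / r * t + -t by rw [hθ]; ring, exp_add]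
        ring

/-! ### Increments of powers -/

section RpowIncrement

variable {a x b : ℝ}

lemma mul_rpow_sub_one_le_rpow_add_sub_rpow (ha : 1 ≤ a) (hx : 0 < x) (hb : 0 ≤ b) :
    b * (x + b) ^ (a - 1) ≤ (x + b) ^ a - x ^ a := by
  have hmono : x ^ (a - 1) ≤ (x + b) ^ (a - 1) := by
    gcongr
    linarith
  have hpow {y : ℝ} (hy : 0 < y) : y ^ a = y ^ (a - 1) * y := by
    rw [← rpow_add_one hy.ne', sub_add_cancel]
  rw [hpow hx, hpow (by linarith : 0 < x + b)]
  linarith [mul_le_mul_of_nonneg_right hmono hx.le]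

-- Bernoulli's inequality for `(x / (x + b)) ^ a = (1 - b / (x + b)) ^ a`.
lemma rpow_add_sub_rpow_le_mul_rpow_sub_one (ha : 1 ≤ a) (hx : 0 < x) (hb : 0 ≤ b) :
    (x + b) ^ a - x ^ a ≤ a * b * (x + b) ^ (a - 1) := by
  have hxb : 0 < x + b := by linarith
  have hratio : 1 + -b / (x + b) = x / (x + b) := by
    field_simp
    ring
  have hbern := one_add_mul_self_le_rpow_one_add (s := -b / (x + b))
    (by rw [le_div_iff₀ hxb]; linarith) ha
  rw [hratio, div_rpow hx.le hxb.le, le_div_iff₀ (by positivity)] at hbern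
  calc (x + b) ^ a - x ^ a ≤ (x + b) ^ a - (1 + a * (-b / (x + b))) * (x + b) ^ a := by gcongr
    _ = a * b * (x + b) ^ (a - 1) := by
        rw [rpow_sub_one hxb.ne']
        ring

end RpowIncrement

/-! ### The coefficient `b_a` -/

lemma bCoef_pos {a : ℝ} (ha : -1 < a) : 0 < bCoef a := by
  have : 0 < Gamma (a + 1) := Gamma_pos_of_pos (by linarith)
  unfold bCoef
  split_ifs <;> positivity

lemma bCoef_rpow_sub_one {a : ℝ} (ha : -1 < a) : bCoef a ^ (a - 1) = Gamma (a + 1) := by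
  rcases eq_or_ne a 1 with rfl | ha1
  · norm_num [Gamma_two]
  · rw [bCoef, if_neg ha1, ← rpow_mul (Gamma_pos_of_pos (by linarith)).le,
      one_div_mul_cancel (sub_ne_zero.2 ha1), rpow_one]

lemma eventually_bCoef_le {c : ℝ} (hc : exp (-1) < c) :
    ∀ᶠ a : ℝ in atTop, bCoef a ≤ c * (a - 1) := by
  obtain ⟨r, hr, hrc⟩ := exists_between hc
  have hr0 : 0 < r := (exp_pos _).trans hr
  have hc0 : 0 < c := hr0.trans hrc
  set K := (1 / (1 - exp (-1) / r)) ^ (2 : ℝ) * Gamma 2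
  have hK : ∀ᶠ a : ℝ in atTop, K ≤ (c / r) ^ (a - 1) :=
    ((tendsto_rpow_atTop_of_base_gt_one _ ((one_lt_div hr0).2 hrc)).comp
      (tendsto_atTop_add_const_right _ (-1) tendsto_id)).eventually_ge_atTop K
  filter_upwards [hK, eventually_gt_atTop 1] with a hKa ha
  have hu : 0 < a - 1 := sub_pos.2 ha
  refine (rpow_le_rpow_iff (bCoef_pos (by linarith)).le (by positivity) hu).1 ?_
  calc bCoef a ^ (a - 1) = Gamma (2 + (a - 1)) := by
        rw [bCoef_rpow_sub_one (by linarith)]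
        ring_nf
    _ ≤ K * (r * (a - 1)) ^ (a - 1) := Gamma_add_le_mul_rpow two_pos hu hr
    _ ≤ (c / r) ^ (a - 1) * (r * (a - 1)) ^ (a - 1) := by gcongr
    _ = (c * (a - 1)) ^ (a - 1) := by
        rw [← mul_rpow (by positivity) (by positivity)]
        field_simp

/-! ### The ratio `G_a(x) / Γ(a,x)` -/

section FirstRatio

variable {a : ℝ}

lemma Gbound_le_rpow_mul_exp_neg {x : ℝ} (ha : 1 ≤ a) (hx : 0 < x) :
    Gbound a x ≤ (x + bCoef a) ^ (a - 1) * exp (-x) := by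
  have hb : 0 < bCoef a := bCoef_pos (by linarith)
  rw [Gbound, div_le_iff₀ (by positivity)]
  calc ((x + bCoef a) ^ a - x ^ a) * exp (-x)
      ≤ a * bCoef a * (x + bCoef a) ^ (a - 1) * exp (-x) := by
        gcongr
        exact rpow_add_sub_rpow_le_mul_rpow_sub_one ha hx hb.le
    _ = (x + bCoef a) ^ (a - 1) * exp (-x) * (a * bCoef a) := by ring

lemma bddAbove_Gbound_div_incGamma (ha : 1 ≤ a) :
    BddAbove ((fun x => Gbound a x / incGamma a x) '' Ioi 0) := by
  have hb : 0 < bCoef a := bCoef_pos (by linarith)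
  refine ⟨exp 1 * (1 + bCoef a) ^ (a - 1), forall_mem_image.2 fun x (hx : 0 < x) => ?_⟩
  rw [div_le_iff₀ (incGamma_pos ha hx.le)]
  calc Gbound a x ≤ (x + bCoef a) ^ (a - 1) * exp (-x) := Gbound_le_rpow_mul_exp_neg ha hx
    _ ≤ ((1 + bCoef a) * (1 + x)) ^ (a - 1) * exp (-x) := by
        gcongr
        nlinarith
    _ = exp 1 * (1 + bCoef a) ^ (a - 1) * ((1 + x) ^ (a - 1) * exp (-(1 + x))) := by
        rw [mul_rpow (by positivity) (by positivity), show -x = 1 + -(1 + x) by ring, exp_add]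
        ring
    _ ≤ exp 1 * (1 + bCoef a) ^ (a - 1) * incGamma a x := by
        gcongr
        exact one_add_rpow_mul_exp_neg_le_incGamma ha hx.le

lemma le_Gbound_div_incGamma {x : ℝ} (ha : 1 ≤ a) (hx : 0 < x) :
    (1 + x / bCoef a) ^ (a - 1) * exp (-x) ≤ Gbound a x / incGamma a x := by
  have hb : 0 < bCoef a := bCoef_pos (by linarith)
  set b := bCoef a
  rw [le_div_iff₀ (incGamma_pos ha hx.le), Gbound, le_div_iff₀ (by positivity)]
  calc (1 + x / b) ^ (a - 1) * exp (-x) * incGamma a x * (a * b)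
      ≤ (1 + x / b) ^ (a - 1) * exp (-x) * Gamma a * (a * b) := by
        gcongr
        exact incGamma_le_Gamma (by linarith) hx.le
    _ = b * ((1 + x / b) ^ (a - 1) * (a * Gamma a)) * exp (-x) := by ring
    _ = b * (x + b) ^ (a - 1) * exp (-x) := by
        rw [← Gamma_add_one (by linarith), ← bCoef_rpow_sub_one (by linarith),
          ← mul_rpow (by positivity) hb.le, one_add_mul, div_mul_cancel₀ _ hb.ne', add_comm b]
    _ ≤ ((x + b) ^ a - x ^ a) * exp (-x) := by
        gcongr
        exact mul_rpow_sub_one_le_rpow_add_sub_rpow ha hx hb.le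

lemma eventually_exp_le_Gbound_div_incGamma {c : ℝ} (hc : exp (-1) < c) :
    ∀ᶠ a : ℝ in atTop,
      exp ((log 2 - c) * (a - 1)) ≤ Gbound a (bCoef a) / incGamma a (bCoef a) := by
  filter_upwards [eventually_bCoef_le hc, eventually_ge_atTop 1] with a hba ha
  have hb : 0 < bCoef a := bCoef_pos (by linarith)
  calc exp ((log 2 - c) * (a - 1)) ≤ exp (log 2 * (a - 1) + -bCoef a) := by
        gcongr
        linarith
    _ = (1 + bCoef a / bCoef a) ^ (a - 1) * exp (-bCoef a) := by
        rw [div_self hb.ne', one_add_one_eq_two, exp_add, rpow_def_of_pos two_pos]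
    _ ≤ Gbound a (bCoef a) / incGamma a (bCoef a) := le_Gbound_div_incGamma ha hb

lemma tendsto_Gbound_div_incGamma_bCoef :
    Tendsto (fun a => Gbound a (bCoef a) / incGamma a (bCoef a)) atTop atTop := by
  have hexp : exp (-1) < 1 / 2 := by
    rw [exp_neg, one_div]
    exact inv_strictAnti₀ two_pos (by linarith [exp_one_gt_d9])
  have hslope : 0 < log 2 - 1 / 2 := by linarith [log_two_gt_d9]
  exact tendsto_atTop_mono' _ (eventually_exp_le_Gbound_div_incGamma hexp)
    (tendsto_exp_atTop.comp
      ((tendsto_atTop_add_const_right _ (-1) tendsto_id).const_mul_atTop hslope))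

end FirstRatio

/-! ### The ratio `Γ(a,x) / g_a(x)` -/

section SecondRatio

variable {a x : ℝ}

lemma Gamma_mul_exp_neg_le_gbound (ha : 1 ≤ a) (hx : 0 ≤ x) :
    Gamma a * exp (-x) ≤ gbound a x := by
  have hsuper := add_rpow_le_rpow_add hx zero_le_two ha
  have hincr : 0 ≤ ((x + 2) ^ a - x ^ a - (2 : ℝ) ^ a) / (2 * a) :=
    div_nonneg (by linarith) (by linarith)
  rw [gbound]
  gcongr
  linarith

lemma one_add_rpow_mul_exp_neg_le_gbound (ha : 1 ≤ a) (hx : 0 < x) :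
    (1 + x) ^ (a - 1) * exp (-x) ≤ (a + 2 ^ a / (2 * Gamma a)) * gbound a x := by
  have hΓ : 0 < Gamma a := Gamma_pos_of_pos (by linarith)
  have hincr : 2 * (1 + x) ^ (a - 1) ≤ (x + 2) ^ a - x ^ a :=
    calc 2 * (1 + x) ^ (a - 1) ≤ 2 * (x + 2) ^ (a - 1) :=
          mul_le_mul_of_nonneg_left
            (rpow_le_rpow (by linarith) (by linarith) (by linarith)) zero_le_two
      _ ≤ (x + 2) ^ a - x ^ a := mul_rpow_sub_one_le_rpow_add_sub_rpow ha hx zero_le_two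
  calc (1 + x) ^ (a - 1) * exp (-x)
      ≤ (((x + 2) ^ a - x ^ a) / 2 + a * Gamma a) * exp (-x) := by
        gcongr
        linarith [mul_pos (zero_lt_one.trans_le ha) hΓ]
    _ = a * gbound a x + 2 ^ a / (2 * Gamma a) * (Gamma a * exp (-x)) := by
        rw [gbound]
        field_simp
        ring
    _ ≤ a * gbound a x + 2 ^ a / (2 * Gamma a) * gbound a x := by
        gcongr
        exact Gamma_mul_exp_neg_le_gbound ha hx.le
    _ = (a + 2 ^ a / (2 * Gamma a)) * gbound a x := by ring

lemma bddAbove_incGamma_div_gbound (ha : 1 ≤ a) :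
    BddAbove ((fun x => incGamma a x / gbound a x) '' Ioi 0) := by
  have hΓ : 0 < Gamma a := Gamma_pos_of_pos (by linarith)
  refine ⟨exp 1 * incGamma a 1 * (a + 2 ^ a / (2 * Gamma a)),
    forall_mem_image.2 fun x (hx : 0 < x) => ?_⟩
  have hg : 0 < gbound a x :=
    (mul_pos hΓ (exp_pos _)).trans_le (Gamma_mul_exp_neg_le_gbound ha hx.le)
  rw [div_le_iff₀ hg]
  calc incGamma a x ≤ (1 + x) ^ (a - 1) * exp (1 - x) * incGamma a 1 :=
        incGamma_le_one_add_rpow_mul_exp ha hx.le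
    _ = exp 1 * incGamma a 1 * ((1 + x) ^ (a - 1) * exp (-x)) := by
        rw [sub_eq_add_neg 1 x, exp_add]
        ring
    _ ≤ exp 1 * incGamma a 1 * ((a + 2 ^ a / (2 * Gamma a)) * gbound a x) :=
        mul_le_mul_of_nonneg_left (one_add_rpow_mul_exp_neg_le_gbound ha hx)
          (mul_nonneg (exp_pos _).le (incGamma_pos ha zero_le_one).le)
    _ = exp 1 * incGamma a 1 * (a + 2 ^ a / (2 * Gamma a)) * gbound a x := by ring

lemma incGamma_isEquivalent_Gamma (hx : 0 ≤ x) :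
    (fun a => incGamma a x) ~[atTop] Gamma := by
  refine IsBigO.trans_isLittleO (.of_bound 1 ?_) (rpow_isLittleO_Gamma x)
  filter_upwards [eventually_ge_atTop 1] with a ha
  have ha0 : 0 < a := by linarith
  rw [one_mul, Pi.sub_apply, norm_sub_rev, norm_of_nonneg (rpow_nonneg hx a),
    norm_of_nonneg (sub_nonneg.2 (incGamma_le_Gamma ha0 hx))]
  exact (Gamma_sub_incGamma_le ha0 hx).trans (div_le_self (rpow_nonneg hx a) ha)

lemma gbound_isEquivalent_Gamma_mul_exp_neg (x : ℝ) :
    (fun a => gbound a x) ~[atTop] fun a => Gamma a * exp (-x) := by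
  have hnum : (fun a : ℝ => (x + 2) ^ a - x ^ a - (2 : ℝ) ^ a) =o[atTop] Gamma :=
    ((rpow_isLittleO_Gamma _).sub (rpow_isLittleO_Gamma _)).sub (rpow_isLittleO_Gamma _)
  have hden : (fun a : ℝ => (2 * a)⁻¹) =O[atTop] fun _ => (1 : ℝ) :=
    (tendsto_id.const_mul_atTop two_pos).inv_tendsto_atTop.isBigO_one ℝ
  have hquot : (fun a : ℝ => ((x + 2) ^ a - x ^ a - (2 : ℝ) ^ a) / (2 * a)) =o[atTop] Gamma := by
    simpa only [div_eq_mul_inv, mul_one] using hnum.mul_isBigO hden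
  exact (hquot.add_isEquivalent IsEquivalent.refl).mul IsEquivalent.refl

lemma tendsto_incGamma_div_gbound (hx : 0 ≤ x) :
    Tendsto (fun a => incGamma a x / gbound a x) atTop (𝓝 (exp x)) := by
  have hequiv := (incGamma_isEquivalent_Gamma hx).div (gbound_isEquivalent_Gamma_mul_exp_neg x)
  refine hequiv.symm.tendsto_nhds ?_
  refine tendsto_const_nhds.congr' ?_
  filter_upwards [eventually_gt_atTop 0] with a ha
  rw [Pi.div_apply, div_mul_cancel_left₀ (Gamma_pos_of_pos ha).ne', exp_neg, inv_inv]

end SecondRatio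

theorem stmt9 :
    Filter.Tendsto (fun a : ℝ => sSup ((fun x : ℝ => Gbound a x / incGamma a x) '' Set.Ioi 0))
      Filter.atTop Filter.atTop ∧
    Filter.Tendsto (fun a : ℝ => sSup ((fun x : ℝ => incGamma a x / gbound a x) '' Set.Ioi 0))
      Filter.atTop Filter.atTop := by
  refine ⟨tendsto_sSup_image_atTop ?_ fun C => ?_, tendsto_sSup_image_atTop ?_ fun C => ?_⟩
  · filter_upwards [eventually_ge_atTop 1] with a ha using bddAbove_Gbound_div_incGamma ha
  · filter_upwards [tendsto_Gbound_div_incGamma_bCoef.eventually_ge_atTop C,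
      eventually_gt_atTop (-1)] with a hC ha using ⟨bCoef a, bCoef_pos ha, hC⟩
  · filter_upwards [eventually_ge_atTop 1] with a ha using bddAbove_incGamma_div_gbound ha
  · obtain ⟨x, hCx, hx⟩ :=
      ((tendsto_exp_atTop.eventually_gt_atTop C).and (eventually_gt_atTop 0)).exists
    filter_upwards [(tendsto_incGamma_div_gbound hx.le).eventually_const_le hCx] with a hC
      using ⟨x, hx, hC⟩
end
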